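/- arXiv:math/0509181 — 3 statements merged into one kernel-verified Lean document; each statement's English description precedes it below -/
import Mathlib

section
/- Any factorial Cauchy matrix F(A,B) is nonsingular, and its determinant has sign (-1)^{ω}, where ω is the number of zero entries. -/
/-!
The zeros of a factorial Cauchy matrix form a staircase in the bottom right corner, strictly below
the antidiagonal.

If there are no zeros, the determinant is positive (`det_pos_of_full`). With `z` the last node, the
ratios `(z)_b / (x)_b` have finite differences in `b` equal to `-(x - z) (z)_b / (x)_{b+1}`; so
clearing the last row by column operations expresses the determinant as a positive combination of
factorial Cauchy determinants of size `n - 1`, again without zeros.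

If there are zeros, the bottom right entry is one. Write `M` for the matrix, `I` for its interior,
and `M₁₁`, `Mₙₙ`, `M₁ₙ`, `Mₙ₁` for `M` with one outer row and one outer column deleted. The
Desnanot–Jacobi identity `desnanot` reads
`det M * det I = det M₁₁ * det Mₙₙ - det M₁ₙ * det Mₙ₁`.
All the minors are factorial Cauchy determinants, except that `M₁₁` may violate the antidiagonal
condition, in which case it has a large zero block and is singular (`det_eq_zero_of_block`).
Counting zeros gives `ω(M) + ω(I) = ω(M₁₁) + ω(Mₙₙ) = ω(M₁ₙ) + ω(Mₙ₁) + 1`, the `1` being the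
bottom right entry. Hence both terms on the right have sign `(-1)^(ω(M) + ω(I))` or vanish, the
second does not vanish, and the sign of `det M` follows by induction (`signed_det_pos`).
-/

/-- The falling factorial `(x)_k = x (x-1) ⋯ (x-k+1)` of a real number. -/
noncomputable def ffact (x : ℝ) (k : ℕ) : ℝ := ∏ i ∈ Finset.range k, (x - (i : ℝ))

/-! ### Matrices without zero entries -/

theorem ffact_succ (x : ℝ) (k : ℕ) : ffact x (k + 1) = ffact x k * (x - k) :=
  Finset.prod_range_succ _ _

theorem ffact_pos {x : ℝ} {k : ℕ} (h : (k : ℝ) - 1 < x) : 0 < ffact x k := by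
  refine Finset.prod_pos fun i hi => ?_
  have : ((i + 1 : ℕ) : ℝ) ≤ k := by exact_mod_cast Finset.mem_range.1 hi
  push_cast at this
  linarith

/-- Telescoping of the one-step identity
`(z)_{k+1}/(x)_{k+1} - (z)_k/(x)_k = -(x - z) (z)_k/(x)_{k+1}`. The factor `x - z` does not depend
on `k`, which is what lets it be pulled out of a whole row of a determinant. -/
theorem ratio_sub {x z : ℝ} {p q : ℕ} (hpq : p ≤ q) (hx : (q : ℝ) - 1 < x) :
    ffact z q * (ffact x q)⁻¹ - ffact z p * (ffact x p)⁻¹ =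
      -((x - z) * ∑ k ∈ Finset.Ico p q, ffact z k * (ffact x (k + 1))⁻¹) := by
  induction q, hpq using Nat.le_induction with
  | base => simp
  | succ q hq ih =>
    push_cast at hx
    have h1 := ih (by linarith)
    have h2 : 0 < ffact x q := ffact_pos (by linarith)
    have h3 : x - q ≠ 0 := by linarith
    rw [Finset.sum_Ico_succ_top hq, mul_add, neg_add, ← h1, ffact_succ, ffact_succ]
    field_simp
    ring

/-- The case without zero entries. After scaling columns by `(z)_{b_j}`, `z` the last node, the last
row consists of ones. Subtracting from each column its predecessor leaves a determinant of size
`n - 1` whose columns are, by `ratio_sub`, positive combinations of factorial Cauchy columns with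
exponents in `(b_j, b_{j+1}]`; expanding it multilinearly gives a positive combination of smaller
determinants of the same kind. -/
theorem det_pos_of_full : ∀ (n : ℕ) (a : Fin n → ℝ) (b : Fin n → ℕ), StrictAnti a → StrictMono b →
    (∀ i j, (b j : ℝ) - 1 < a i) →
    0 < (Matrix.of fun i j : Fin n => (ffact (a i) (b j))⁻¹).det
  | 0, _, _, _, _, _ => by simp
  | n + 1, a, b, ha, hb, hab => by
    set z := a (Fin.last n) with hz
    let C : Matrix (Fin (n + 1)) (Fin (n + 1)) ℝ :=
      Matrix.of fun i j => ffact z (b j) * (ffact (a i) (b j))⁻¹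
    have hC : C.det = (∏ j, ffact z (b j)) *
        (Matrix.of fun i j : Fin (n + 1) => (ffact (a i) (b j))⁻¹).det :=
      Matrix.det_mul_row _ _
    have hpos : 0 < ∏ j, ffact z (b j) := Finset.prod_pos fun j _ => ffact_pos (hab _ j)
    suffices 0 < C.det by
      rw [hC] at this
      exact pos_of_mul_pos_right this hpos.le
    let B : Matrix (Fin (n + 1)) (Fin (n + 1)) ℝ :=
      Matrix.of fun i => Fin.cons (C i 0) fun j => C i j.succ - C i j.castSucc
    have hCB : C.det = B.det := by
      refine Matrix.det_eq_of_forall_col_eq_smul_add_pred (fun _ => 1) (fun i => ?_) fun i j => ?_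
      · simp [B]
      · simp [B]
    let S : Matrix (Fin n) (Fin n) ℝ := Matrix.of fun i j =>
      ∑ k ∈ Finset.Ico (b j.castSucc) (b j.succ), ffact z k * (ffact (a i.castSucc) (k + 1))⁻¹
    have hlast : ∀ j, C (Fin.last n) j = 1 := fun j => mul_inv_cancel₀ (ffact_pos (hab _ j)).ne'
    have hBS : B.det = (∏ i : Fin n, (a i.castSucc - z)) * S.det := by
      rw [Matrix.det_succ_row B (Fin.last n), Fin.sum_univ_succ, Finset.sum_eq_zero, add_zero]
      · have h0 : B (Fin.last n) 0 = 1 := by simp [B, hlast]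
        have hsub : B.submatrix (Fin.last n).succAbove (Fin.succAbove 0) =
            -(Matrix.of fun i j => (a i.castSucc - z) * S i j) := by
          ext i j
          simp only [Matrix.submatrix_apply, Fin.succAbove_last, Fin.succAbove_zero, B,
            Matrix.of_apply, Fin.cons_succ, Matrix.neg_apply, C, S]
          exact ratio_sub (hb.monotone Fin.castSucc_lt_succ.le) (hab _ _)
        -- The sign `(-1)^n` of the expansion cancels the one coming from the `n` columns of `hsub`.
        rw [h0, hsub, Matrix.det_neg, Matrix.det_mul_column, Fintype.card_fin, Fin.val_last,
          Fin.val_zero, add_zero, mul_one, ← mul_assoc, ← mul_pow]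
        simp
      · intro j _
        simp [B, hlast]
    rw [hCB, hBS]
    refine mul_pos (Finset.prod_pos fun i _ => sub_pos.2 (ha (Fin.castSucc_lt_last i))) ?_
    have hS : S.det = ∑ r ∈ Fintype.piFinset fun j : Fin n => Finset.Ico (b j.castSucc) (b j.succ),
        (∏ j, ffact z (r j)) *
          (Matrix.of fun i j : Fin n => (ffact (a i.castSucc) (r j + 1))⁻¹).det := by
      rw [← Matrix.det_transpose]
      have := (Matrix.detRowAlternating (n := Fin n) (R := ℝ)).toMultilinearMap.map_sum_finset
        (fun (j : Fin n) (k : ℕ) (i : Fin n) => ffact z k * (ffact (a i.castSucc) (k + 1))⁻¹)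
        (fun j : Fin n => Finset.Ico (b j.castSucc) (b j.succ))
      refine Eq.trans ?_ (this.trans (Finset.sum_congr rfl fun r _ => ?_))
      · change Matrix.det _ = Matrix.det _
        congr 1
        ext j i
        simp [S, Finset.sum_apply]
      · rw [← Matrix.det_mul_row, ← Matrix.det_transpose]
        rfl
    rw [hS]
    refine Finset.sum_pos (fun r hr => ?_) ?_
    · have hr' : ∀ j, b j.castSucc ≤ r j ∧ r j < b j.succ := fun j =>
        Finset.mem_Ico.1 (Fintype.mem_piFinset.1 hr j)
      have hle : ∀ j, ((r j + 1 : ℕ) : ℝ) ≤ b j.succ := fun j => by exact_mod_cast (hr' j).2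
      refine mul_pos (Finset.prod_pos fun j _ => ffact_pos ?_)
        (det_pos_of_full n (fun i => a i.castSucc) (fun j => r j + 1)
          (fun i j h => ha (Fin.castSucc_lt_castSucc_iff.2 h)) (fun j j' h => ?_) fun i j => ?_)
      · have h1 := hle j
        have h2 := hab (Fin.last n) j.succ
        push_cast at h1
        linarith
      -- The intervals `(b_j, b_{j+1}]` are consecutive, so any choice of exponents is increasing.
      · have h1 : b j.succ ≤ b j'.castSucc := hb.monotone (by
          rw [Fin.le_def]; simpa using h)
        have := (hr' j).2
        have := (hr' j').1
        change r j + 1 < r j' + 1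
        omega
      · have h1 := hle j
        have h2 := hab i.castSucc j.succ
        linarith
    · exact Fintype.piFinset_nonempty.2 fun j => Finset.nonempty_Ico.2 (hb Fin.castSucc_lt_succ)

/-! ### Determinant identities -/

/-- The Desnanot–Jacobi identity in adjugate form, when `det M` can be cancelled: take determinants
in `M * N`, where `N` is the identity matrix with its first and last columns replaced by those of
`adjugate M`. -/
theorem desnanot_aux {R : Type*} [CommRing R] [IsDomain R] {n : ℕ}
    (M : Matrix (Fin (n + 2)) (Fin (n + 2)) R) (hM : M.det ≠ 0) :
    M.det * (M.submatrix (fun i : Fin n => i.castSucc.succ) (fun j : Fin n => j.castSucc.succ)).det =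
      M.adjugate 0 0 * M.adjugate (Fin.last _) (Fin.last _)
        - M.adjugate 0 (Fin.last _) * M.adjugate (Fin.last _) 0 := by
  have h0L : (0 : Fin (n + 2)) ≠ Fin.last (n + 1) := (Fin.last_pos).ne
  let A := M.adjugate
  let U : Matrix (Fin (n + 2)) (Fin 2) R :=
    Matrix.of fun i k => A i ((![0, Fin.last _] : Fin 2 → Fin (n + 2)) k) - (1 : Matrix (Fin (n + 2)) (Fin (n + 2)) R) i ((![0, Fin.last _] : Fin 2 → Fin (n + 2)) k)
  let V : Matrix (Fin 2) (Fin (n + 2)) R :=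
    Matrix.of fun k j => (1 : Matrix (Fin (n + 2)) (Fin (n + 2)) R) ((![0, Fin.last _] : Fin 2 → Fin (n + 2)) k) j
  -- `N = 1 + U * V` is a rank-two perturbation of `1`, so its determinant is a `2 × 2` one.
  have hN : (1 + U * V).det = A 0 0 * A (Fin.last _) (Fin.last _)
      - A 0 (Fin.last _) * A (Fin.last _) 0 := by
    rw [Matrix.det_one_add_mul_comm]
    have : 1 + V * U = !![A 0 0, A 0 (Fin.last _); A (Fin.last _) 0, A (Fin.last _) (Fin.last _)] := by
      have hVU : ∀ k l, (V * U) k l = U ((![0, Fin.last _] : Fin 2 → Fin (n + 2)) k) l := by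
        intro k l
        rw [Matrix.mul_apply]
        simp only [V, Matrix.of_apply]
        generalize (![0, Fin.last _] : Fin 2 → Fin (n + 2)) k = m
        simp [Matrix.one_apply]
      ext i j
      rw [Matrix.add_apply, hVU]
      fin_cases i <;> fin_cases j <;>
        simp [U, Matrix.one_apply, h0L, h0L.symm]
    rw [this, Matrix.det_fin_two_of]
  have hMA : ∀ i j, ∑ k, M i k * A k j = M.det * (1 : Matrix (Fin (n + 2)) (Fin (n + 2)) R) i j := fun i j => by
    rw [← Matrix.mul_apply, Matrix.mul_adjugate]; simp
  let P := M * (1 + U * V)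
  have hP : ∀ i j, P i j = if j = 0 then M.det * (1 : Matrix (Fin (n + 2)) (Fin (n + 2)) R) i 0
      else if j = Fin.last _ then M.det * (1 : Matrix (Fin (n + 2)) (Fin (n + 2)) R) i (Fin.last _) else M i j := by
    intro i j
    have hUV : ∀ k, (1 + U * V : Matrix (Fin (n + 2)) (Fin (n + 2)) R) k j = if j = 0 then A k 0
      else if j = Fin.last _ then A k (Fin.last _) else (1 : Matrix (Fin (n + 2)) (Fin (n + 2)) R) k j := by
      intro k
      simp only [Matrix.add_apply, Matrix.mul_apply, Fin.sum_univ_two, U, V, Matrix.of_apply]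
      by_cases h0 : j = 0
      · subst h0; simp [Matrix.one_apply, h0L.symm]; exact add_sub_cancel _ _
      · by_cases hL : j = Fin.last _
        · subst hL; simp [Matrix.one_apply, h0L, h0L.symm]
        · simp [Matrix.one_apply, h0, hL, Ne.symm h0, Ne.symm hL]
    simp only [P]
    rw [Matrix.mul_apply]
    simp only [hUV]
    split_ifs
    · exact hMA i 0
    · exact hMA i _
    · simp [Matrix.one_apply]
  have hdP : P.det = M.det * (M.det *
      (M.submatrix (fun i : Fin n => i.castSucc.succ) (fun j : Fin n => j.castSucc.succ)).det) := by
    rw [Matrix.det_succ_column_zero, Fintype.sum_eq_single 0]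
    · rw [hP]
      simp only [Fin.val_zero, pow_zero, one_mul, if_true, Matrix.one_apply_eq, mul_one,
        Fin.succAbove_zero]
      rw [Matrix.det_succ_column _ (Fin.last n), Fintype.sum_eq_single (Fin.last n)]
      · have hsub : ((P.submatrix Fin.succ Fin.succ).submatrix
            (Fin.last n).succAbove (Fin.last n).succAbove) =
            M.submatrix (fun i : Fin n => i.castSucc.succ) (fun j : Fin n => j.castSucc.succ) := by
          ext i j
          simp only [Matrix.submatrix_apply, Fin.succAbove_last]
          rw [hP, if_neg (Fin.succ_ne_zero _), if_neg]
          rw [← Fin.succ_last, Fin.succ_inj]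
          exact (Fin.castSucc_lt_last j).ne
        rw [hsub]
        simp only [Matrix.submatrix_apply]
        rw [hP, if_neg (Fin.succ_ne_zero _), Fin.succ_last, if_pos rfl, Matrix.one_apply_eq]
        simp
      · intro i hi
        simp only [Matrix.submatrix_apply]
        rw [hP, if_neg (Fin.succ_ne_zero _), Fin.succ_last, if_pos rfl, Matrix.one_apply_ne]
        · simp
        · rw [← Fin.succ_last]; exact fun h => hi (Fin.succ_inj.1 h)
    · intro i hi
      rw [hP, if_pos rfl, Matrix.one_apply_ne hi]; simp
  have hdet : P.det = M.det * _ := Matrix.det_mul M (1 + U * V)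
  rw [hN, hdP] at hdet
  exact mul_left_cancel₀ hM hdet

/-- The Desnanot–Jacobi identity (Dodgson condensation). It is obtained by specializing the
identity for the generic matrix, whose determinant is nonzero. -/
theorem desnanot {n : ℕ} (M : Matrix (Fin (n + 2)) (Fin (n + 2)) ℝ) :
    M.det * (M.submatrix (fun i : Fin n => i.castSucc.succ) (fun j : Fin n => j.castSucc.succ)).det =
      (M.submatrix Fin.succ Fin.succ).det * (M.submatrix Fin.castSucc Fin.castSucc).det
      - (M.submatrix Fin.succ Fin.castSucc).det * (M.submatrix Fin.castSucc Fin.succ).det := by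
  have key : M.det * (M.submatrix (fun i : Fin n => i.castSucc.succ)
      (fun j : Fin n => j.castSucc.succ)).det =
      M.adjugate 0 0 * M.adjugate (Fin.last _) (Fin.last _)
        - M.adjugate 0 (Fin.last _) * M.adjugate (Fin.last _) 0 := by
    have h := desnanot_aux (Matrix.mvPolynomialX (Fin (n + 2)) (Fin (n + 2)) ℝ)
      (Matrix.det_mvPolynomialX_ne_zero _ _)
    let φ : MvPolynomial (Fin (n + 2) × Fin (n + 2)) ℝ →+* ℝ :=
      MvPolynomial.eval fun p => M p.1 p.2
    have hφ : φ.mapMatrix (Matrix.mvPolynomialX (Fin (n + 2)) (Fin (n + 2)) ℝ) = M := by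
      ext i j; simp [φ, Matrix.mvPolynomialX_apply]
    have hA : ∀ i j, φ ((Matrix.mvPolynomialX (Fin (n + 2)) (Fin (n + 2)) ℝ).adjugate i j)
        = M.adjugate i j := fun i j => by
      have := φ.map_adjugate (Matrix.mvPolynomialX (Fin (n + 2)) (Fin (n + 2)) ℝ)
      rw [hφ] at this
      rw [← this]; rfl
    have h2 := congrArg φ h
    rw [map_sub, map_mul, map_mul, map_mul, hA, hA, hA, hA, φ.map_det, φ.map_det, hφ] at h2
    rw [← h2]
    congr 2
    ext i j; simp [φ, Matrix.mvPolynomialX_apply]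
  rw [key]
  simp only [Matrix.adjugate_fin_succ_eq_det_submatrix, Fin.succAbove_zero, Fin.succAbove_last,
    Fin.val_zero, Fin.val_last]
  have h1 : ((-1 : ℝ) ^ (n + 1)) * (-1) ^ (n + 1) = 1 := by rw [← mul_pow]; simp
  simp only [zero_add, add_zero, pow_zero, one_mul, pow_add _ (n + 1) (n + 1), h1]
  linear_combination (-(M.submatrix Fin.succ Fin.castSucc).det *
    (M.submatrix Fin.castSucc Fin.succ).det) * h1

/-- The block of rows `≥ i` and columns `≥ i.rev` has `n + 1` rows and columns in total, so if it
vanishes then every permutation product meets it. -/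
theorem det_eq_zero_of_block {n : ℕ} (M : Matrix (Fin n) (Fin n) ℝ) (i : Fin n)
    (h : ∀ i' j', i ≤ i' → i.rev ≤ j' → M i' j' = 0) : M.det = 0 := by
  rw [Matrix.det_apply]
  refine Finset.sum_eq_zero fun σ _ => ?_
  suffices ∃ j, i.rev ≤ j ∧ i ≤ σ j by
    obtain ⟨j, h1, h2⟩ := this
    have hp : ∏ k, M (σ k) k = 0 := Finset.prod_eq_zero (Finset.mem_univ j) (h _ _ h2 h1)
    rw [hp, smul_zero]
  by_contra! hc
  have := Finset.card_le_card_of_injOn (s := Finset.Ici i.rev) (t := Finset.Iio i) σ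
    (fun j hj => by simpa using hc j (by simpa using hj)) σ.injective.injOn
  simp [Fin.val_rev] at this
  omega

/-! ### The sign of a factorial Cauchy determinant -/

/-- The factorial Cauchy matrix `F(A, B)`. -/
noncomputable def facCauchy {n : ℕ} (a : Fin n → ℝ) (b : Fin n → ℕ) : Matrix (Fin n) (Fin n) ℝ :=
  Matrix.of fun i j => if (b j : ℝ) - 1 < a i then (ffact (a i) (b j))⁻¹ else 0

/-- The number `ω` of zero entries of `F(A, B)`, as a double sum of indicators. -/
noncomputable def zeroCount {n : ℕ} (a : Fin n → ℝ) (b : Fin n → ℕ) : ℕ :=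
  ∑ i, ∑ j, if a i < (b j : ℝ) - 1 then 1 else 0

theorem zeroCount_eq_zero {n : ℕ} {a : Fin n → ℝ} {b : Fin n → ℕ}
    (h : ∀ i j, (b j : ℝ) - 1 < a i) : zeroCount a b = 0 :=
  Finset.sum_eq_zero fun i _ => Finset.sum_eq_zero fun j _ => if_neg (h i j).not_gt

/-- Inclusion–exclusion for the four corner submatrices and the interior: the total plus the
interior is the sum over two opposite corner submatrices plus the two entries that neither of
them contains. -/
theorem sum_corners {n : ℕ} (f : Fin (n + 2) → Fin (n + 2) → ℕ) :
    (∑ i, ∑ j, f i j) + ∑ i : Fin n, ∑ j : Fin n, f i.castSucc.succ j.castSucc.succ =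
      (∑ i : Fin (n + 1), ∑ j : Fin (n + 1), f i.succ j.castSucc) +
      (∑ i : Fin (n + 1), ∑ j : Fin (n + 1), f i.castSucc j.succ) +
      f 0 0 + f (Fin.last _) (Fin.last _) ∧
    (∑ i, ∑ j, f i j) + ∑ i : Fin n, ∑ j : Fin n, f i.castSucc.succ j.castSucc.succ =
      (∑ i : Fin (n + 1), ∑ j : Fin (n + 1), f i.succ j.succ) +
      (∑ i : Fin (n + 1), ∑ j : Fin (n + 1), f i.castSucc j.castSucc) +
      f 0 (Fin.last _) + f (Fin.last _) 0 := by
  have e1 : ∀ g : Fin (n + 2) → ℕ, ∑ j, g j =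
      g 0 + ∑ j : Fin n, g j.castSucc.succ + g (Fin.last _) := fun g => by
    rw [Fin.sum_univ_succ, Fin.sum_univ_castSucc, ← add_assoc]; rfl
  have e2 : ∀ g : Fin (n + 2) → ℕ, ∑ j : Fin (n + 1), g j.succ =
      ∑ j : Fin n, g j.castSucc.succ + g (Fin.last _) := fun g => by
    rw [Fin.sum_univ_castSucc]; rfl
  have e3 : ∀ g : Fin (n + 2) → ℕ, ∑ j : Fin (n + 1), g j.castSucc =
      g 0 + ∑ j : Fin n, g j.castSucc.succ := fun g => by
    rw [Fin.sum_univ_succ]; rfl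
  constructor
  · rw [e1, e2 (fun i => ∑ j : Fin (n + 1), f i j.castSucc),
      e3 (fun i => ∑ j : Fin (n + 1), f i j.succ)]
    simp only [e1 (f _), e2 (f _), e3 (f _), Finset.sum_add_distrib]
    ring
  · rw [e1, e2 (fun i => ∑ j : Fin (n + 1), f i j.succ),
      e3 (fun i => ∑ j : Fin (n + 1), f i j.castSucc)]
    simp only [e1 (f _), e2 (f _), e3 (f _), Finset.sum_add_distrib]
    ring

theorem signed_det_pos_of_full {n : ℕ} {a : Fin n → ℝ} {b : Fin n → ℕ}
    (ha : StrictAnti a) (hb : StrictMono b) (h : ∀ i j, (b j : ℝ) - 1 < a i) :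
    0 < (-1 : ℝ) ^ zeroCount a b * (facCauchy a b).det := by
  rw [zeroCount_eq_zero h, pow_zero, one_mul]
  simpa only [facCauchy, h, if_true] using det_pos_of_full n a b ha hb h

/-- `(-1)^ω det F(A, B) > 0`. If the bottom right entry is nonzero, so are all entries. Otherwise
the Desnanot–Jacobi identity and induction apply: with `p1`, `p2` tracking the parities of the zero
counts, both terms on its right-hand side contribute with the same sign. -/
theorem signed_det_pos : ∀ (n : ℕ) (a : Fin n → ℝ) (b : Fin n → ℕ), StrictAnti a → StrictMono b →
    (∀ i : Fin n, (b i.rev : ℝ) - 1 < a i) → (∀ i j, a i ≠ (b j : ℝ) - 1) →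
    0 < (-1 : ℝ) ^ zeroCount a b * (facCauchy a b).det
  | 0, _, _, ha, hb, _, _ => signed_det_pos_of_full ha hb fun i => i.elim0
  | 1, a, b, ha, hb, hab, _ => signed_det_pos_of_full ha hb fun i j => by
      rw [Subsingleton.elim j i.rev]; exact hab i
  | n + 2, a, b, ha, hb, hab, hne => by
    have hbR : ∀ {i j}, i ≤ j → (b i : ℝ) ≤ b j := fun h => by exact_mod_cast hb.monotone h
    have hs : ∀ {m} {i j : Fin m}, i < j → i.succ < j.succ := Fin.succ_lt_succ_iff.2
    have hc : ∀ {m} {i j : Fin m}, i < j → i.castSucc < j.castSucc :=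
      Fin.castSucc_lt_castSucc_iff.2
    by_cases hL : (b (Fin.last _) : ℝ) - 1 < a (Fin.last _)
    · refine signed_det_pos_of_full ha hb fun i j => ?_
      have h1 := hbR (Fin.le_last j)
      have h2 := ha.antitone (Fin.le_last i)
      linarith
    have hI := signed_det_pos n (fun i => a i.castSucc.succ) (fun j => b j.castSucc.succ)
      (fun i j h => ha (hs (hc h))) (fun i j h => hb (hs (hc h)))
      (fun i => by simpa [Fin.rev_succ, Fin.rev_castSucc] using hab i.castSucc.succ)
      (fun _ _ => hne _ _)
    have hN := signed_det_pos (n + 1) (fun i => a i.castSucc) (fun j => b j.castSucc)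
      (fun i j h => ha (hc h)) (fun i j h => hb (hc h))
      (fun i => by
        have h1 := hab i.castSucc
        rw [Fin.rev_castSucc] at h1
        have h2 := hbR (Fin.castSucc_lt_succ (i := i.rev)).le
        linarith)
      (fun _ _ => hne _ _)
    have h1 := signed_det_pos (n + 1) (fun i => a i.succ) (fun j => b j.castSucc)
      (fun i j h => ha (hs h)) (fun i j h => hb (hc h))
      (fun i => by simpa [Fin.rev_succ] using hab i.succ) (fun _ _ => hne _ _)
    have h2 := signed_det_pos (n + 1) (fun i => a i.castSucc) (fun j => b j.succ)
      (fun i j h => ha (hc h)) (fun i j h => hb (hs h))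
      (fun i => by simpa [Fin.rev_castSucc] using hab i.castSucc) (fun _ _ => hne _ _)
    -- The bottom right corner submatrix need not satisfy the antidiagonal condition; when it does
    -- not, it contains a zero block that makes it singular, and its term drops out.
    have h3 : 0 ≤ (-1 : ℝ) ^ zeroCount (fun i : Fin (n + 1) => a i.succ) (fun j => b j.succ) *
        (facCauchy (fun i : Fin (n + 1) => a i.succ) (fun j => b j.succ)).det := by
      by_cases h : ∀ i : Fin (n + 1), (b i.rev.succ : ℝ) - 1 < a i.succ
      · exact (signed_det_pos (n + 1) _ _ (fun i j h => ha (hs h)) (fun i j h => hb (hs h)) h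
          (fun _ _ => hne _ _)).le
      · push Not at h
        obtain ⟨i, hi⟩ := h
        rw [det_eq_zero_of_block _ i, mul_zero]
        intro i' j' hi' hj'
        refine if_neg (not_lt.2 ?_)
        have h1 := hbR (Fin.succ_le_succ_iff.2 hj')
        have h2 := ha.antitone (Fin.succ_le_succ_iff.2 hi')
        linarith
    have hD : (facCauchy a b).det *
          (facCauchy (fun i : Fin n => a i.castSucc.succ) (fun j => b j.castSucc.succ)).det =
        (facCauchy (fun i : Fin (n + 1) => a i.succ) (fun j => b j.succ)).det *
          (facCauchy (fun i : Fin (n + 1) => a i.castSucc) (fun j => b j.castSucc)).det -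
        (facCauchy (fun i : Fin (n + 1) => a i.succ) (fun j => b j.castSucc)).det *
          (facCauchy (fun i : Fin (n + 1) => a i.castSucc) (fun j => b j.succ)).det :=
      desnanot (facCauchy a b)
    obtain ⟨c1, c2⟩ := sum_corners fun i j => if a i < (b j : ℝ) - 1 then 1 else 0
    have z00 : ¬ a 0 < (b 0 : ℝ) - 1 := by
      have := hab 0
      have := hbR (Fin.zero_le (Fin.rev (0 : Fin (n + 2))))
      linarith
    have z0L : ¬ a 0 < (b (Fin.last _) : ℝ) - 1 := by
      have := hab 0
      rw [Fin.rev_zero] at this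
      exact this.not_gt
    have zL0 : ¬ a (Fin.last _) < (b 0 : ℝ) - 1 := by
      have := hab (Fin.last _)
      rw [Fin.rev_last] at this
      exact this.not_gt
    have zLL : a (Fin.last _) < (b (Fin.last _) : ℝ) - 1 := lt_of_le_of_ne (not_lt.1 hL) (hne _ _)
    rw [if_neg z00, if_pos zLL] at c1
    rw [if_neg z0L, if_neg zL0] at c2
    have p1 := congrArg (fun m : ℕ => (-1 : ℝ) ^ m) c1
    have p2 := congrArg (fun m : ℕ => (-1 : ℝ) ^ m) c2
    simp only [pow_add, add_zero, pow_one] at p1 p2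
    refine pos_of_mul_pos_left (b := _) ?_ hI.le
    have key := add_pos_of_nonneg_of_pos (mul_nonneg h3 hN.le) (mul_pos h1 h2)
    refine key.trans_eq ?_
    simp only [zeroCount] at *
    linear_combination
      -((facCauchy (fun i : Fin (n + 1) => a i.succ) (fun j => b j.succ)).det *
          (facCauchy (fun i : Fin (n + 1) => a i.castSucc) (fun j => b j.castSucc)).det) * p2 +
        ((facCauchy (fun i : Fin (n + 1) => a i.succ) (fun j => b j.castSucc)).det *
          (facCauchy (fun i : Fin (n + 1) => a i.castSucc) (fun j => b j.succ)).det) * p1 -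
        ((-1 : ℝ) ^ (∑ i, ∑ j, if a i < (b j : ℝ) - 1 then 1 else 0) *
         (-1 : ℝ) ^ (∑ i : Fin n, ∑ j : Fin n,
            if a i.castSucc.succ < (b j.castSucc.succ : ℝ) - 1 then 1 else 0)) * hD

/-- Any factorial Cauchy matrix is nonsingular and the sign of its determinant
is `(-1)^ω`, where `ω` is the number of zero entries. -/
theorem stmt8 (n : ℕ) (a : Fin n → ℝ) (b : Fin n → ℕ)
    (ha : StrictAnti a) (hb : StrictMono b) (hbpos : ∀ j, 0 < b j)
    (hab : ∀ i : Fin n, (b i.rev : ℝ) - 1 < a i)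
    (hne : ∀ i j : Fin n, a i ≠ (b j : ℝ) - 1)
    (hnz : ∀ i j : Fin n, (b j : ℝ) - 1 < a i → ∀ k : ℕ, k < b j → a i ≠ (k : ℝ)) :
    (Matrix.of fun i j : Fin n =>
        if (b j : ℝ) - 1 < a i then (ffact (a i) (b j))⁻¹ else 0).det ≠ 0 ∧
    (Even (Finset.univ.filter fun p : Fin n × Fin n => a p.1 < (b p.2 : ℝ) - 1).card →
      0 < (Matrix.of fun i j : Fin n =>
        if (b j : ℝ) - 1 < a i then (ffact (a i) (b j))⁻¹ else 0).det) ∧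
    (Odd (Finset.univ.filter fun p : Fin n × Fin n => a p.1 < (b p.2 : ℝ) - 1).card →
      (Matrix.of fun i j : Fin n =>
        if (b j : ℝ) - 1 < a i then (ffact (a i) (b j))⁻¹ else 0).det < 0) := by
  have hcard : (Finset.univ.filter fun p : Fin n × Fin n => a p.1 < (b p.2 : ℝ) - 1).card =
      zeroCount a b := by
    rw [Finset.card_filter, Fintype.sum_prod_type]; rfl
  have h := signed_det_pos n a b ha hb hab hne
  rw [hcard]
  change (facCauchy a b).det ≠ 0 ∧ (_ → 0 < (facCauchy a b).det) ∧ (_ → (facCauchy a b).det < 0)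
  refine ⟨fun h0 => ?_, fun he => ?_, fun ho => ?_⟩
  · simp [h0] at h
  · simpa [he.neg_one_pow] using h
  · simpa [ho.neg_one_pow] using h
end

section
/- The double Schur function admits a combinatorial expansion: S_λ(X,Y) = Σ_T ∏_{α ∈ T} (x_{T(α)} - y_{T(α)+τ(α)}), where the sum is over all semistandard Young tableaux T of shape λ with entries in {1,...,n}, T(α) is the entry in cell α, and τ(α) = j - i is the content of cell α = (i,j). In particular, det((x_i|Y)_{λ_j+n-j})_{i,j=1}^n = Δ(X) · Σ_T ∏_{α ∈ T} (x_{T(α)} - y_{T(α)+τ(α)}). -/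
/-!
Induction on the number `n` of variables: both sides satisfy the same branching rule, obtained by
splitting off the last variable `z = x_n`. Write `l i` for the `i`-th row length of `μ` and count
rows from `0`, so that in `n + 1` variables the exponents are `l j + (n - j)`.

*Determinant side* (`det_step`). Subtracting from each column a suitable multiple of the next one
makes the row of `z` vanish except in its last entry, which is `(z|Y)_{l n}`. The other entries
telescope (`fp_sub`) to
`(x - z) * ∑ r ∈ [l (j+1), l j], (∏_{r ≤ k < l j} (z - y_{n+1+k-j})) * (x|Y)_{r+n-1-j}`.
Expanding along the row of `z` and using multilinearity in the columns gives `∏ (x_i - z)` times a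
sum over the sequences `r` interlacing with `l` of the same determinants for the shape `r` in one
variable less.

*Tableau side* (`sum_type`). The cells of a tableau with entry different from the maximal value
form a Young diagram whose row lengths `r` interlace with those of `μ`; interlacing is exactly what
makes the removed cells a horizontal strip, so that any tableau on the smaller diagram can be
extended by the maximal value. The removed cells contribute precisely the factors
`z - y_{n+1+k-j}` found above, the bottom row `n` contributing `(z|Y)_{l n}`.
-/

/-! ### The branching rule for the determinant -/

/-- The shifted power `(x|Y)_k = ∏_{m=1}^k (x - y_m)`. -/
def fp (Y : ℕ → ℝ) (x : ℝ) (k : ℕ) : ℝ := ∏ m ∈ Finset.range k, (x - Y (m + 1))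

/-- Telescoping identity for shifted powers: each summand on the right, multiplied by
`x - z = (x - y_{r+d+1}) - (z - y_{r+d+1})`, is a difference of consecutive terms. Here `d` is the
shift `n - 1 - j` relating a row length to the corresponding exponent. -/
lemma fp_sub (Y : ℕ → ℝ) (x z : ℝ) (d a b : ℕ) (h : a ≤ b) :
    fp Y x (b + 1 + d) - (∏ j ∈ Finset.Ico a (b + 1), (z - Y (j + d + 1))) * fp Y x (a + d) =
      (x - z) * ∑ r ∈ Finset.Icc a b,
        (∏ j ∈ Finset.Ico r b, (z - Y (j + d + 2))) * fp Y x (r + d) := by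
  induction b, h using Nat.le_induction with
  | base =>
    simp [fp, show a + 1 + d = a + d + 1 by ring, Finset.prod_range_succ]
    ring
  | succ b h ih =>
    rw [Finset.prod_Ico_succ_top (by omega), ← Finset.insert_Icc_right_eq_Icc_add_one (by omega),
      Finset.sum_insert (by simp)]
    have : ∑ r ∈ Finset.Icc a b,
        (∏ j ∈ Finset.Ico r (b + 1), (z - Y (j + d + 2))) * fp Y x (r + d) =
      (∑ r ∈ Finset.Icc a b,
        (∏ j ∈ Finset.Ico r b, (z - Y (j + d + 2))) * fp Y x (r + d)) * (z - Y (b + d + 2)) := by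
      rw [Finset.sum_mul]
      refine Finset.sum_congr rfl fun r hr => ?_
      rw [Finset.prod_Ico_succ_top (Finset.mem_Icc.1 hr).2]
      ring
    rw [this, mul_add, ← mul_assoc (x - z) (∑ r ∈ _, _), ← ih]
    have e : fp Y x (b + 1 + 1 + d) = fp Y x (b + 1 + d) * (x - Y (b + d + 2)) := by
      rw [show b + 1 + 1 + d = b + 1 + d + 1 by ring, fp, Finset.prod_range_succ, fp]
      rw [show b + 1 + d + 1 = b + d + 2 by ring]
    rw [e, Finset.Ico_self, Finset.prod_empty, show b + 1 + d + 1 = b + d + 2 by ring]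
    ring

/-- Subtracting from each column a multiple of the next one preserves the determinant. -/
lemma det_col {n : ℕ} (A B : Matrix (Fin (n + 1)) (Fin (n + 1)) ℝ) (c : Fin n → ℝ)
    (h1 : ∀ i, A i (Fin.last n) = B i (Fin.last n))
    (h2 : ∀ i (j : Fin n), A i j.castSucc = B i j.castSucc + c j * A i j.succ) :
    A.det = B.det := by
  rw [← Matrix.det_submatrix_equiv_self Fin.revPerm A, ← Matrix.det_submatrix_equiv_self Fin.revPerm B]
  refine Matrix.det_eq_of_forall_col_eq_smul_add_pred (fun j => c j.rev) ?_ ?_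
  · intro i; simpa using h1 i.rev
  · intro i j
    simpa [Fin.rev_succ, Fin.rev_castSucc] using h2 i.rev j.rev

lemma prod_lt_succ {n : ℕ} (x : Fin (n + 1) → ℝ) :
    (∏ p ∈ Finset.univ.filter (fun p : Fin (n+1) × Fin (n+1) => p.1 < p.2), (x p.1 - x p.2)) =
    (∏ i : Fin n, (x i.castSucc - x (Fin.last n))) *
    ∏ p ∈ Finset.univ.filter (fun p : Fin n × Fin n => p.1 < p.2),
      (x p.1.castSucc - x p.2.castSucc) := by
  simp only [Finset.prod_filter, Fintype.prod_prod_type, Fin.prod_univ_castSucc,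
    Fin.castSucc_lt_castSucc_iff, Fin.castSucc_lt_last, if_true, lt_irrefl, if_false, mul_one,
    Finset.prod_mul_distrib]
  have : ∀ j : Fin n, ¬ Fin.last n < j.castSucc := fun j => not_lt.2 (Fin.le_last _)
  simp [this, mul_comm]

/-- Branching rule for the determinant when the last variable is split off. The factor
`Y (n + 1 + j - i)` has no truncated subtraction since `i < n`. -/
lemma det_step (n : ℕ) (x : Fin (n + 1) → ℝ) (Y : ℕ → ℝ) (l : ℕ → ℕ) (hl : Antitone l) :
    (Matrix.of fun i j : Fin (n + 1) => fp Y (x i) (l j + (n - j))).det =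
      (∏ i : Fin n, (x i.castSucc - x (Fin.last n))) *
      ∑ r ∈ Fintype.piFinset (fun j : Fin n => Finset.Icc (l (j + 1)) (l j)),
        fp Y (x (Fin.last n)) (l n) *
        (∏ i : Fin n, ∏ j ∈ Finset.Ico (r i) (l i), (x (Fin.last n) - Y (n + 1 + j - i))) *
        (Matrix.of fun i j : Fin n => fp Y (x i.castSucc) (r j + (n - 1 - j))).det := by
  set z := x (Fin.last n) with hz
  -- `Q` is what remains of the reduced matrix `B` below after deleting the last row and column
  -- and pulling the factor `x i - z` out of each row.
  set Q : Matrix (Fin n) (Fin n) ℝ := Matrix.of fun i j => ∑ r ∈ Finset.Icc (l (j + 1)) (l j),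
        (∏ k ∈ Finset.Ico r (l j), (z - Y (n + 1 + k - j))) * fp Y (x i.castSucc) (r + (n - 1 - j))
    with hQ
  set B : Matrix (Fin (n + 1)) (Fin (n + 1)) ℝ := Matrix.of fun i j =>
    Fin.lastCases (fp Y (x i) (l n))
      (fun j : Fin n => (x i - z) * ∑ r ∈ Finset.Icc (l (j + 1)) (l j),
        (∏ k ∈ Finset.Ico r (l j), (z - Y (n + 1 + k - j))) * fp Y (x i) (r + (n - 1 - j))) j with hB
  have e1 : (Matrix.of fun i j : Fin (n + 1) => fp Y (x i) (l j + (n - j))).det = B.det := by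
    refine det_col _ _ (fun j => ∏ k ∈ Finset.Ico (l (j + 1)) (l j + 1), (z - Y (k + (n - 1 - j) + 1))) ?_ ?_
    · intro i; simp [hB]
    · intro i j
      have := fp_sub Y (x i) z (n - 1 - j) (l (j + 1)) (l j) (hl (by omega))
      simp only [Matrix.of_apply, hB, Fin.lastCases_castSucc, Fin.val_castSucc, Fin.val_succ]
      have hj := j.2
      rw [show l j + (n - j) = l j + 1 + (n - 1 - j) by omega,
        show n - (j + 1 : ℕ) = n - 1 - j by omega, ← sub_eq_iff_eq_add, this]
      congr 1
      refine Finset.sum_congr rfl fun r _ => ?_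
      congr 1
      refine Finset.prod_congr rfl fun k _ => ?_
      congr 2
      omega
  have e2 : B.det = fp Y z (l n) * (Matrix.of fun i j : Fin n => (x i.castSucc - z) * Q i j).det := by
    rw [Matrix.det_succ_row B (Fin.last n), Fin.sum_univ_castSucc, Finset.sum_eq_zero]
    · simp only [zero_add, Fin.succAbove_last]
      rw [Even.neg_one_pow (by simp)]
      simp only [one_mul]
      congr 1
      · simp [hB, hz]
      · congr 1
        ext i j
        simp [hB, hQ]
    · intro j _
      simp [hB, hz]
  have e3 : Q.det = ∑ r ∈ Fintype.piFinset (fun j : Fin n => Finset.Icc (l (j + 1)) (l j)),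
        (∏ i : Fin n, ∏ j ∈ Finset.Ico (r i) (l i), (z - Y (n + 1 + j - i))) *
        (Matrix.of fun i j : Fin n => fp Y (x i.castSucc) (r j + (n - 1 - j))).det := by
    have := (Matrix.detRowAlternating (n := Fin n) (R := ℝ)).toMultilinearMap.map_sum_finset
      (fun (j : Fin n) (r : ℕ) (i : Fin n) => (∏ k ∈ Finset.Ico r (l j), (z - Y (n + 1 + k - j))) *
         fp Y (x i.castSucc) (r + (n - 1 - j))) (fun j : Fin n => Finset.Icc (l (j + 1)) (l j))
    rw [← Matrix.det_transpose]
    convert this using 1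
    · refine congrArg Matrix.detRowAlternating ?_
      ext j i
      simp [hQ, Finset.sum_apply]
    · refine Finset.sum_congr rfl fun r _ => ?_
      rw [← Matrix.det_mul_row, ← Matrix.det_transpose]
      rfl
  rw [e1, e2, Matrix.det_mul_column, e3, ← mul_assoc, mul_comm (fp _ _ _), mul_assoc, Finset.mul_sum]
  simp only [mul_assoc]

/-! ### Tableaux and their layer of maximal entries -/

/-- Semistandardness of a filling of `μ` by `Fin n`: rows weakly increase, columns strictly. -/
def IsSST (n : ℕ) (μ : YoungDiagram) (T : μ.cells → Fin n) : Prop :=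
  (∀ c c' : μ.cells, (c : ℕ × ℕ).1 = (c' : ℕ × ℕ).1 →
    (c : ℕ × ℕ).2 ≤ (c' : ℕ × ℕ).2 → T c ≤ T c') ∧
  (∀ c c' : μ.cells, (c : ℕ × ℕ).2 = (c' : ℕ × ℕ).2 →
    (c : ℕ × ℕ).1 < (c' : ℕ × ℕ).1 → T c < T c')

/-- The factor `x_t - y_{t+τ(c)}` of a cell `c` with entry `t`. As `t : Fin n` is zero-based, the
index of `y` is `t + 1 + c.2 - c.1`. -/
def wt {n : ℕ} (x : Fin n → ℝ) (Y : ℕ → ℝ) (t : Fin n) (c : ℕ × ℕ) : ℝ :=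
  x t - Y ((t : ℕ) + 1 + c.2 - c.1)

/-- Extension of a sequence of `n` row lengths by zero. -/
def rext {n : ℕ} (r : Fin n → ℕ) (i : ℕ) : ℕ := if h : i < n then r ⟨i, h⟩ else 0

/-- An entry of a semistandard tableau is at least its row index. In particular, with entries in
`Fin (n + 1)`, row `n` holds only the maximal value. -/
lemma row_le_entry {n : ℕ} {μ : YoungDiagram} {T : μ.cells → Fin n} (hT : IsSST n μ T) :
    ∀ (i j : ℕ) (h : (i, j) ∈ μ.cells), i ≤ T ⟨(i, j), h⟩ := by
  intro i
  induction i with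
  | zero => simp
  | succ i ih =>
    intro j h
    have h' : (i, j) ∈ μ.cells := μ.isLowerSet (show (i, j) ≤ (i + 1, j) by simp) h
    have := hT.2 ⟨(i, j), h'⟩ ⟨(i + 1, j), h⟩ rfl (by simp)
    have := ih j h'
    omega

/-- The part of `μ` whose `i`-th row is cut off at length `r i`. -/
def truncD (μ : YoungDiagram) (r : ℕ → ℕ) (hr : Antitone r) : YoungDiagram where
  cells := μ.cells.filter fun c => c.2 < r c.1
  isLowerSet := by
    intro a b hab ha
    simp only [Finset.coe_filter, Set.mem_ofPred_eq] at ha ⊢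
    exact ⟨μ.isLowerSet hab ha.1, (hab.2.trans_lt ha.2).trans_le (hr hab.1)⟩

lemma fst_lt {n : ℕ} {μ : YoungDiagram} (hμ : μ.colLen 0 ≤ n) {c : ℕ × ℕ} (hc : c ∈ μ.cells) :
    c.1 < n := by
  have : (c.1, 0) ∈ μ := μ.isLowerSet (show (c.1, 0) ≤ c from ⟨le_rfl, Nat.zero_le _⟩) hc
  exact (YoungDiagram.mem_iff_lt_colLen.1 this).trans_le hμ

section step
variable {n : ℕ} {μ : YoungDiagram}

/-- The cells of `T` with non-maximal entry form a diagram with row lengths `r` (rows `≥ n` being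
empty). -/
def HasType (r : Fin n → ℕ) (T : μ.cells → Fin (n + 1)) : Prop :=
  ∀ c : μ.cells, T c ≠ Fin.last n ↔ (c : ℕ × ℕ).2 < rext r (c : ℕ × ℕ).1

/-- A sequence interlacing with the row lengths of `μ` is itself a sequence of row lengths. -/
lemma rext_antitone {r : Fin n → ℕ}
    (hr : ∀ i : Fin n, μ.rowLen (i + 1) ≤ r i ∧ r i ≤ μ.rowLen i) : Antitone (rext r) := by
  refine antitone_nat_of_succ_le fun i => ?_
  unfold rext
  split_ifs with h1 h2
  · exact (hr ⟨i + 1, h1⟩).2.trans (hr ⟨i, h2⟩).1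
  · omega
  · simp
  · simp

/-- The non-maximal entries of a semistandard tableau occupy a Young diagram interlacing with `μ`. -/
lemma exists_type {T : μ.cells → Fin (n + 1)} (hT : IsSST (n + 1) μ T) :
    ∃ r : Fin n → ℕ, (∀ i : Fin n, μ.rowLen (i + 1) ≤ r i ∧ r i ≤ μ.rowLen i) ∧ HasType r T := by
  classical
  let ν : YoungDiagram :=
    { cells := μ.cells.filter fun c => ∃ h : c ∈ μ.cells, T ⟨c, h⟩ ≠ Fin.last n
      isLowerSet := by
        intro a b hab ha
        simp only [Finset.coe_filter, Set.mem_ofPred_eq] at ha ⊢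
        obtain ⟨ha, _, h⟩ := ha
        have hb : b ∈ μ.cells := μ.isLowerSet hab ha
        refine ⟨hb, hb, fun hl => h (le_antisymm (Fin.le_last _) ?_)⟩
        have hm : (a.1, b.2) ∈ μ.cells :=
          μ.isLowerSet (show (a.1, b.2) ≤ a from ⟨le_rfl, hab.2⟩) ha
        have h1 := hT.1 ⟨_, hm⟩ ⟨a, ha⟩ rfl hab.2
        refine le_trans ?_ h1
        rw [← hl]
        rcases hab.1.lt_or_eq with h2 | h2
        · exact (hT.2 ⟨b, hb⟩ ⟨_, hm⟩ rfl h2).le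
        · exact hT.1 ⟨b, hb⟩ ⟨_, hm⟩ h2 le_rfl }
  have hν : ∀ (c : ℕ × ℕ) (h : c ∈ μ.cells), T ⟨c, h⟩ ≠ Fin.last n ↔ c ∈ ν := by
    intro c h
    rw [← YoungDiagram.mem_cells]
    simp only [ν, Finset.mem_filter, h, true_and, exists_true_left]
  have hsub : ∀ c ∈ ν, c ∈ μ := by
    intro c hc
    exact (Finset.mem_filter.1 ((YoungDiagram.mem_cells _).2 hc)).1
  refine ⟨fun i => ν.rowLen i, fun i => ⟨?_, ?_⟩, ?_⟩
  · by_contra! h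
    have h1 : ((i : ℕ) + 1, ν.rowLen i) ∈ μ.cells := YoungDiagram.mem_iff_lt_rowLen.2 h
    have h2 : ((i : ℕ), ν.rowLen i) ∈ μ.cells :=
      μ.isLowerSet (show ((i : ℕ), ν.rowLen i) ≤ ((i : ℕ) + 1, ν.rowLen i) by simp) h1
    have h3 := hT.2 ⟨_, h2⟩ ⟨_, h1⟩ rfl (by simp)
    have h4 := (hν _ h2).1 (h3.trans_le (Fin.le_last _)).ne
    exact lt_irrefl _ (YoungDiagram.mem_iff_lt_rowLen.1 h4)
  · by_contra! h
    have h1 := hsub _ (YoungDiagram.mem_iff_lt_rowLen.2 h)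
    exact lt_irrefl _ (YoungDiagram.mem_iff_lt_rowLen.1 h1)
  · rintro ⟨⟨i, j⟩, hc⟩
    rw [hν]
    by_cases hi : i < n
    · simp [rext, hi, YoungDiagram.mem_iff_lt_rowLen]
    · simp only [rext, hi, dite_false, not_lt_zero, iff_false]
      rw [← hν _ hc, not_not]
      have := row_le_entry hT i j hc
      apply Fin.ext
      simp only [Fin.val_last]
      omega

lemma type_unique {T : μ.cells → Fin (n + 1)} {r r' : Fin n → ℕ}
    (hr : ∀ i : Fin n, r i ≤ μ.rowLen i) (hr' : ∀ i : Fin n, r' i ≤ μ.rowLen i)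
    (h : HasType r T) (h' : HasType r' T) : r = r' := by
  have key : ∀ (s s' : Fin n → ℕ) (_ : ∀ i : Fin n, s' i ≤ μ.rowLen i)
      (_ : HasType s T) (_ : HasType s' T) (i : Fin n), s' i ≤ s i := by
    intro s s' hs hS hS' i
    by_contra! hlt
    have hc : ((i : ℕ), s i) ∈ μ.cells := YoungDiagram.mem_iff_lt_rowLen.2 (hlt.trans_le (hs i))
    have h1 := (hS ⟨_, hc⟩).symm.trans (hS' ⟨_, hc⟩)
    simp [rext] at h1
    omega
  exact funext fun i => le_antisymm (key _ _ hr h' h i) (key _ _ hr' h h' i)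

/-- Extension of a filling of `ν` to all cells of the plane by the maximal value. -/
def extT {ν : YoungDiagram} (T : ν.cells → Fin n) (c : ℕ × ℕ) : Fin (n + 1) :=
  if h : c ∈ ν.cells then (T ⟨c, h⟩).castSucc else Fin.last n

lemma extT_ne_last {ν : YoungDiagram} (T : ν.cells → Fin n) (c : ℕ × ℕ) :
    extT T c ≠ Fin.last n ↔ c ∈ ν.cells := by
  unfold extT
  split_ifs with h <;> simp [h, Fin.castSucc_ne_last]

open Classical in
/-- Restriction to the non-maximal entries is a bijection from tableaux of shape `μ` and type `r`
to tableaux of the shape `ν` with row lengths `r`; its inverse is `extT`. -/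
lemma sum_type (hμ : μ.colLen 0 ≤ n + 1) (x : Fin (n + 1) → ℝ) (Y : ℕ → ℝ) (r : Fin n → ℕ)
    (hr : ∀ i : Fin n, μ.rowLen (i + 1) ≤ r i ∧ r i ≤ μ.rowLen i) (ν : YoungDiagram)
    (hν : ∀ c, c ∈ ν.cells ↔ c ∈ μ.cells ∧ c.2 < rext r c.1) :
    ∑ T ∈ Finset.univ.filter (fun T : μ.cells → Fin (n + 1) => IsSST (n + 1) μ T ∧ HasType r T),
      ∏ c : μ.cells, wt x Y (T c) c =
    fp Y (x (Fin.last n)) (μ.rowLen n) *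
      (∏ i : Fin n, ∏ j ∈ Finset.Ico (r i) (μ.rowLen i),
        (x (Fin.last n) - Y (n + 1 + j - i))) *
      ∑ T ∈ Finset.univ.filter (fun T : ν.cells → Fin n => IsSST n ν T),
        ∏ c : ν.cells, wt (fun i => x i.castSucc) Y (T c) c := by
  have hsub : ν.cells ⊆ μ.cells := fun c hc => ((hν c).1 hc).1
  rw [Finset.mul_sum]
  symm
  refine Finset.sum_bij' (fun T _ c => extT T c)
    (fun T hT c => (T ⟨c, hsub c.2⟩).castPred
      (((Finset.mem_filter.1 hT).2.2 ⟨c, hsub c.2⟩).2 ((hν c).1 c.2).2)) ?_ ?_ ?_ ?_ ?_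
  · intro T hT
    have hT := (Finset.mem_filter.1 hT).2
    refine Finset.mem_filter.2 ⟨Finset.mem_univ _, ⟨?_, ?_⟩, ?_⟩
    · rintro ⟨c, hc⟩ ⟨c', hc'⟩ h1 h2
      simp only at h1 h2 ⊢
      by_cases hm' : c' ∈ ν.cells
      · have hm : c ∈ ν.cells := ν.isLowerSet (show c ≤ c' from ⟨h1.le, h2⟩) hm'
        simp only [extT, hm, hm', dite_true, Fin.castSucc_le_castSucc_iff]
        exact hT.1 ⟨c, hm⟩ ⟨c', hm'⟩ h1 h2
      · simp only [extT, hm', dite_false]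
        exact Fin.le_last _
    · rintro ⟨c, hc⟩ ⟨c', hc'⟩ h1 h2
      simp only at h1 h2 ⊢
      -- A cell of `μ` with another cell of `μ` below it lies in `ν`, because `r` interlaces.
      have hm : c ∈ ν.cells := by
        refine (hν c).2 ⟨hc, ?_⟩
        have h3 := fst_lt hμ hc'
        have h4 : c.1 < n := by omega
        have h5 : c'.2 < μ.rowLen c'.1 := YoungDiagram.mem_iff_lt_rowLen.1 hc'
        have h6 := μ.rowLen_anti (c.1 + 1) c'.1 h2
        have h7 := (hr ⟨c.1, h4⟩).1
        simp only [rext, h4, dite_true]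
        simp only at h7
        omega
      by_cases hm' : c' ∈ ν.cells
      · simp only [extT, hm, hm', dite_true, Fin.castSucc_lt_castSucc_iff]
        exact hT.2 ⟨c, hm⟩ ⟨c', hm'⟩ h1 h2
      · simp only [extT, hm, hm', dite_false, dite_true]
        exact Fin.castSucc_lt_last _
    · rintro ⟨c, hc⟩
      rw [extT_ne_last, hν]
      simp [(YoungDiagram.mem_cells _).1 hc]
  · intro T hT
    have hT := (Finset.mem_filter.1 hT).2.1
    refine Finset.mem_filter.2 ⟨Finset.mem_univ _, ?_, ?_⟩
    · intro c c' h1 h2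
      exact hT.1 ⟨c, hsub c.2⟩ ⟨c', hsub c'.2⟩ h1 h2
    · intro c c' h1 h2
      exact hT.2 ⟨c, hsub c.2⟩ ⟨c', hsub c'.2⟩ h1 h2
  · intro T hT
    funext c
    apply Fin.ext
    simp [extT]
  · intro T hT
    have hT := (Finset.mem_filter.1 hT).2.2
    funext ⟨c, hc⟩
    simp only [extT]
    split_ifs with h
    · simp
    · by_contra h'
      exact h ((hν c).2 ⟨hc, (hT ⟨c, hc⟩).1 (Ne.symm h')⟩)
  · intro T hT
    rw [Finset.prod_coe_sort μ.cells (fun c => wt x Y (extT T c) c), ← Finset.prod_sdiff hsub]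
    congr 1
    · have h1 : ∀ c ∈ μ.cells \ ν.cells, wt x Y (extT T c) c =
          x (Fin.last n) - Y (n + 1 + c.2 - c.1) := by
        intro c hc
        simp [wt, extT, mt (YoungDiagram.mem_cells c).2 (Finset.mem_sdiff.1 hc).2]
      rw [Finset.prod_congr rfl h1, Finset.prod_finset_product _ (Finset.range (n + 1))
        (fun i => Finset.Ico (rext r i) (μ.rowLen i)), Finset.prod_range_succ, mul_comm]
      · congr 1
        · rw [Finset.prod_range]
          refine Finset.prod_congr rfl fun i _ => ?_
          simp [rext]
        · simp only [rext, lt_irrefl, dite_false, fp, ← Finset.range_eq_Ico]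
          refine Finset.prod_congr rfl fun j _ => ?_
          congr 2; omega
      · rintro ⟨i, j⟩
        simp only [Finset.mem_sdiff, hν, Finset.mem_range, Finset.mem_Ico]
        have h2 : (i, j) ∈ μ.cells ↔ j < μ.rowLen i := YoungDiagram.mem_iff_lt_rowLen
        have h3 : (i, j) ∈ μ.cells → i < n + 1 := fun h => fst_lt hμ h
        rw [h2] at h3 ⊢
        constructor
        · rintro ⟨h, h'⟩
          exact ⟨h3 h, not_lt.1 fun h4 => h' ⟨h, h4⟩, h⟩
        · rintro ⟨_, h, h'⟩
          exact ⟨h', fun h4 => absurd h4.2 (not_lt.2 h)⟩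
    · rw [← Finset.prod_coe_sort ν.cells (fun c => wt x Y (extT T c) c)]
      refine Finset.prod_congr rfl fun c _ => ?_
      simp [wt, extT]

end step

/-! ### The induction -/

open Classical in
/-- The expansion, phrased with `fp`, `IsSST` and `wt`. -/
lemma det_fp_eq_sum_tableaux : ∀ (n : ℕ) (μ : YoungDiagram) (_ : μ.colLen 0 ≤ n)
    (x : Fin n → ℝ) (Y : ℕ → ℝ),
    (Matrix.of fun i j : Fin n => fp Y (x i) (μ.rowLen j + (n - 1 - (j : ℕ)))).det =
      (∏ p ∈ Finset.univ.filter (fun p : Fin n × Fin n => p.1 < p.2), (x p.1 - x p.2)) *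
      ∑ T ∈ Finset.univ.filter (fun T : μ.cells → Fin n => IsSST n μ T),
        ∏ c : μ.cells, wt x Y (T c) c := by
  intro n
  induction n with
  | zero =>
    intro μ hμ x Y
    have : IsEmpty μ.cells := ⟨fun c => absurd (fst_lt hμ c.2) (by simp)⟩
    have hall : ∀ T : μ.cells → Fin 0, IsSST 0 μ T := fun T =>
      ⟨fun c => isEmptyElim c, fun c => isEmptyElim c⟩
    simp [hall]
  | succ n ih =>
    intro μ hμ x Y
    have hA := det_step n x Y μ.rowLen (fun a b h => μ.rowLen_anti a b h)
    simp only [Nat.add_sub_cancel]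
    rw [hA, prod_lt_succ, mul_assoc]
    congr 1
    -- Group the tableaux by type; each has exactly one.
    have hsplit : ∑ T ∈ Finset.univ.filter (fun T : μ.cells → Fin (n + 1) => IsSST (n + 1) μ T),
        ∏ c : μ.cells, wt x Y (T c) c =
        ∑ r ∈ Fintype.piFinset (fun j : Fin n => Finset.Icc (μ.rowLen (j + 1)) (μ.rowLen j)),
        ∑ T ∈ Finset.univ.filter
          (fun T : μ.cells → Fin (n + 1) => IsSST (n + 1) μ T ∧ HasType r T),
          ∏ c : μ.cells, wt x Y (T c) c := by
      rw [Finset.sum_comm' (t' := Finset.univ.filter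
          (fun T : μ.cells → Fin (n + 1) => IsSST (n + 1) μ T))
        (s' := fun T => (Fintype.piFinset
          (fun j : Fin n => Finset.Icc (μ.rowLen (j + 1)) (μ.rowLen j))).filter
            fun r => HasType r T)]
      · refine Finset.sum_congr rfl fun T hT => ?_
        obtain ⟨r, hr, hrT⟩ := exists_type (Finset.mem_filter.1 hT).2
        have : (Fintype.piFinset
          (fun j : Fin n => Finset.Icc (μ.rowLen (j + 1)) (μ.rowLen j))).filter
            (fun r => HasType r T) = {r} := by
          ext r'
          simp only [Finset.mem_filter, Fintype.mem_piFinset, Finset.mem_Icc,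
            Finset.mem_singleton]
          constructor
          · rintro ⟨h1, h2⟩
            exact type_unique (fun i => (h1 i).2) (fun i => (hr i).2) h2 hrT
          · rintro rfl
            exact ⟨hr, hrT⟩
        rw [this, Finset.sum_singleton]
      · intro r T
        simp only [Finset.mem_filter, Finset.mem_univ, true_and]
        tauto
    rw [hsplit, Finset.mul_sum]
    refine Finset.sum_congr rfl fun r hr => ?_
    have hr : ∀ i : Fin n, μ.rowLen (i + 1) ≤ r i ∧ r i ≤ μ.rowLen i := by
      simpa [Fintype.mem_piFinset] using hr
    let ν := truncD μ (rext r) (rext_antitone hr)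
    have hν : ∀ c, c ∈ ν.cells ↔ c ∈ μ.cells ∧ c.2 < rext r c.1 := by
      intro c; simp [ν, truncD]
    have hrow : ∀ i : Fin n, ν.rowLen i = r i := by
      intro i
      have h : ∀ j, j < ν.rowLen i ↔ j < r i := by
        intro j
        rw [← YoungDiagram.mem_iff_lt_rowLen, ← YoungDiagram.mem_cells, hν,
          YoungDiagram.mem_cells, YoungDiagram.mem_iff_lt_rowLen]
        have := (hr i).2
        simp [rext]
        omega
      exact le_antisymm (not_lt.1 fun h' => lt_irrefl _ ((h _).1 h'))
        (not_lt.1 fun h' => lt_irrefl _ ((h _).2 h'))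
    have hcol : ν.colLen 0 ≤ n := by
      by_contra! h
      have h1 := ((hν _).1 ((YoungDiagram.mem_cells _).2 (YoungDiagram.mem_iff_lt_colLen.2 h))).2
      simp [rext] at h1
    have := ih ν hcol (fun i => x i.castSucc) Y
    simp only [hrow] at this
    rw [sum_type hμ x Y r hr ν hν, this]
    ring


/-- The combinatorial expansion of the double Schur function: for a partition `μ` with
at most `n` parts, `det((x_i|Y)_{λ_j+n-j}) = Δ(X) · Σ_T ∏_{α∈T} (x_{T(α)} - y_{T(α)+τ(α)})`,
the sum being over semistandard Young tableaux of shape `μ` with entries in `{1,…,n}`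
(encoded here with entries in `Fin n`, so that the one-based entry is `T c + 1`),
where `τ(i,j) = j - i` is the content. -/
theorem stmt10 (n : ℕ) (μ : YoungDiagram) (hμ : μ.colLen 0 ≤ n)
    (x : Fin n → ℝ) (Y : ℕ → ℝ) :
    (Matrix.of fun i j : Fin n =>
        ∏ m ∈ Finset.range (μ.rowLen j + (n - 1 - (j : ℕ))), (x i - Y (m + 1))).det =
      (∏ p ∈ Finset.univ.filter (fun p : Fin n × Fin n => p.1 < p.2), (x p.1 - x p.2)) *
      ∑ T ∈ Finset.univ.filter (fun T : μ.cells → Fin n =>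
          (∀ c c' : μ.cells, (c : ℕ × ℕ).1 = (c' : ℕ × ℕ).1 →
            (c : ℕ × ℕ).2 ≤ (c' : ℕ × ℕ).2 → T c ≤ T c') ∧
          (∀ c c' : μ.cells, (c : ℕ × ℕ).2 = (c' : ℕ × ℕ).2 →
            (c : ℕ × ℕ).1 < (c' : ℕ × ℕ).1 → T c < T c')),
        ∏ c : μ.cells,
          (x (T c) - Y ((T c : ℕ) + 1 + (c : ℕ × ℕ).2 - (c : ℕ × ℕ).1)) := by
  classical
  refine (det_fp_eq_sum_tableaux n μ hμ x Y).trans (congrArg _ (Finset.sum_congr ?_ fun _ _ => rfl))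
  -- The two filters differ only in their decidability instances.
  ext T
  rw [Finset.mem_filter, Finset.mem_filter]
  rfl
end

section
/- Any inverse binomial matrix R(A,B) is nonsingular, and the sign of det(R(A,B)) is (-1)^{ω}, where ω is the number of zero entries: positive if ω is even, negative if ω is odd. -/
/-!
Since `1 / C(a, b) = b! (a - b)! / a!`, the matrix has, up to positive row and column factors, the
entries `(a - b)!`, truncated to `0` where `a < b`; the zeros form a staircase in the lower right
corner.

If there are no zeros the determinant is positive (`full_pos`): every minor of the kernel
`(a - b)!` with `a` decreasing and `b` increasing is positive, which is proved by taking differences of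
consecutive normalized rows.

Otherwise the lower right entry is zero, and the Desnanot–Jacobi identity (`dodgson`)
`det M * det M_int = det M_ss * det M_cc - det M_cs * det M_sc` applies, where `s` drops the first and
`c` the last row or column. The minors other than `M_ss` again satisfy the antidiagonal condition, so
induction gives their signs; `M_ss` either satisfies it too or has determinant zero
(`truncDet_eq_zero`). Counting zeros (`signProd_minors`), the corner zero makes both terms
`det M_ss * det M_cc` and `-(det M_cs * det M_sc)` have the sign `(-1) ^ ω * sign (det M_int)`, where
`ω` is the number of zeros of `M`; the first term may vanish, the second does not.
-/

/-- Jacobi's argument: replace the first and last columns of the identity matrix by those of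
`M.adjugate`, multiply by `M`, and compare determinants after cancelling `M.det`. -/
theorem dodgson_of_ne_zero {R : Type*} [CommRing R] [IsDomain R] (n : ℕ)
    (M : Matrix (Fin (n + 2)) (Fin (n + 2)) R) (hM : M.det ≠ 0) :
    M.det * (M.submatrix (fun i : Fin n => i.succ.castSucc) (fun i : Fin n => i.succ.castSucc)).det =
      (M.submatrix Fin.succ Fin.succ).det * (M.submatrix Fin.castSucc Fin.castSucc).det -
      (M.submatrix Fin.castSucc Fin.succ).det * (M.submatrix Fin.succ Fin.castSucc).det := by
  set l := Fin.last (n + 1) with hl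
  have hl0 : l ≠ 0 := Fin.last_pos.ne'
  -- `1 + U * V` is the identity with first and last columns taken from the adjugate.
  let U : Matrix (Fin (n + 2)) (Fin 2) R :=
    Matrix.of fun i => ![M.adjugate i 0 - (1 : Matrix (Fin (n + 2)) (Fin (n + 2)) R) i 0,
      M.adjugate i l - (1 : Matrix (Fin (n + 2)) (Fin (n + 2)) R) i l]
  let V : Matrix (Fin 2) (Fin (n + 2)) R := Matrix.of ![Pi.single 0 1, Pi.single l 1]
  let Q : Matrix (Fin (n + 2)) (Fin (n + 2)) R := Matrix.of fun i j =>
    if j = 0 then (if i = 0 then M.det else 0) else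
      if j = l then (if i = l then M.det else 0) else M i j
  have hN : (1 + U * V).det =
      M.adjugate 0 0 * M.adjugate l l - M.adjugate 0 l * M.adjugate l 0 := by
    rw [Matrix.det_one_add_mul_comm, Matrix.det_fin_two]
    simp [U, V, Matrix.one_apply, hl0, hl0.symm]
  have hadj : ∀ i j, ∑ k, M i k * M.adjugate k j = if i = j then M.det else 0 := by
    intro i j
    have := congrFun (congrFun (Matrix.mul_adjugate M) i) j
    simpa [Matrix.mul_apply, Matrix.one_apply] using this
  have hMU : ∀ i, (M * U) i 0 = (if i = 0 then M.det else 0) - M i 0 ∧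
      (M * U) i 1 = (if i = l then M.det else 0) - M i l := by
    intro i
    constructor
    · simp [Matrix.mul_apply, U, mul_sub, Finset.sum_sub_distrib, hadj, Matrix.one_apply]
    · simp [Matrix.mul_apply, U, mul_sub, Finset.sum_sub_distrib, hadj, Matrix.one_apply]
  have hQ : M * (1 + U * V) = Q := by
    rw [mul_add, mul_one, ← Matrix.mul_assoc]
    ext i j
    rw [Matrix.add_apply, Matrix.mul_apply, Fin.sum_univ_two, (hMU i).1, (hMU i).2]
    simp only [V, Q, Matrix.of_apply, Matrix.cons_val_zero, Matrix.cons_val_one, Pi.single_apply]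
    by_cases h0 : j = 0
    · subst h0; simp [hl0.symm]
    · by_cases h1 : j = l
      · subst h1; simp [hl0]
      · simp [h0, h1]
  have hQd : Q.det = M.det * (M.det * (M.submatrix (fun i : Fin n => i.succ.castSucc)
      (fun i : Fin n => i.succ.castSucc)).det) := by
    rw [Matrix.det_succ_column_zero, Finset.sum_eq_single 0]
    · rw [Matrix.det_succ_column _ (Fin.last n), Finset.sum_eq_single (Fin.last n)]
      · have : (fun i : Fin n => i.succ.castSucc) = fun i => i.castSucc.succ := by
          ext i; simp
        rw [this]
        have e : ((Q.submatrix (Fin.succAbove 0) Fin.succ).submatrix (Fin.last n).succAbove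
            (Fin.last n).succAbove) =
            M.submatrix (fun i : Fin n => i.castSucc.succ) (fun i : Fin n => i.castSucc.succ) := by
          ext i j
          have h1 : j.castSucc.succ ≠ l := by
            rw [hl, ← Fin.succ_last]
            exact fun h => (Fin.castSucc_lt_last j).ne (Fin.succ_injective _ h)
          simp [Q, h1]
        rw [e]
        have h2 : (Fin.last n).succ = l := by rw [hl, Fin.succ_last]
        simp [Q, h2, hl0, ← two_mul]
      · intro i _ hi
        have h2 : (Fin.last n).succ = l := by rw [hl, Fin.succ_last]
        have h3 : i.succ ≠ l := fun h => hi (Fin.succ_injective _ (h.trans h2.symm))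
        simp [Q, h2, hl0, h3]
      · simp
    · intro i _ hi
      simp [Q, hi]
    · simp
  have h := congrArg Matrix.det hQ
  rw [Matrix.det_mul, hN, hQd] at h
  have h' := mul_left_cancel₀ hM h
  rw [← h']
  simp only [Matrix.adjugate_fin_succ_eq_det_submatrix, hl, Fin.succAbove_last]
  have hs : ((-1 : R) ^ (n + 1)) * (-1) ^ (n + 1) = 1 := by
    rw [← mul_pow]; simp
  have hz : (0 : Fin (n + 2)).succAbove = Fin.succ := by ext; simp
  simp only [hz, Fin.val_last, Fin.val_zero, add_zero, zero_add, pow_zero, one_mul, pow_add] at hs ⊢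
  linear_combination ((M.submatrix Fin.succ Fin.succ).det *
    (M.submatrix Fin.castSucc Fin.castSucc).det - (M.submatrix Fin.castSucc Fin.succ).det *
    (M.submatrix Fin.succ Fin.castSucc).det) * hs

/-- The Desnanot–Jacobi (Dodgson) identity. It holds for the generic matrix, whose determinant is
nonzero in the domain of integer polynomials, and hence for every matrix by specialization. -/
theorem dodgson {R : Type*} [CommRing R] (n : ℕ) (M : Matrix (Fin (n + 2)) (Fin (n + 2)) R) :
    M.det * (M.submatrix (fun i : Fin n => i.succ.castSucc) (fun i : Fin n => i.succ.castSucc)).det =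
      (M.submatrix Fin.succ Fin.succ).det * (M.submatrix Fin.castSucc Fin.castSucc).det -
      (M.submatrix Fin.castSucc Fin.succ).det * (M.submatrix Fin.succ Fin.castSucc).det := by
  let X := Matrix.mvPolynomialX (Fin (n + 2)) (Fin (n + 2)) ℤ
  have h := dodgson_of_ne_zero n X (Matrix.det_mvPolynomialX_ne_zero _ _)
  let φ : MvPolynomial (Fin (n + 2) × Fin (n + 2)) ℤ →+* R :=
    MvPolynomial.eval₂Hom (Int.castRingHom R) fun p => M p.1 p.2
  have hX : X.map φ = M := Matrix.mvPolynomialX_map_eval₂ _ M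
  have h' := congrArg φ h
  simp only [map_mul, map_sub, RingHom.map_det, RingHom.mapMatrix_apply,
    ← Matrix.submatrix_map, hX] at h'
  exact h'

open Nat in
theorem factorial_div_sub {A B b : ℕ} (hB : B ≤ A) (hb : b ≤ B) :
    ((A + 1 - b)! : ℝ) / (A + 1 - B)! - ((A - b)! : ℝ) / (A - B)! =
      (B - b : ℝ) / (A + 1 - B)! * (A - b)! := by
  obtain ⟨x, rfl⟩ := Nat.exists_eq_add_of_le hB
  obtain ⟨d, rfl⟩ := Nat.exists_eq_add_of_le hb
  have e1 : b + d + x + 1 - b = d + x + 1 := by omega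
  have e2 : b + d + x + 1 - (b + d) = x + 1 := by omega
  have e3 : b + d + x - b = d + x := by omega
  have e4 : b + d + x - (b + d) = x := by omega
  rw [e1, e2, e3, e4, Nat.factorial_succ, Nat.factorial_succ]
  have : (x ! : ℝ) ≠ 0 := by positivity
  have : (x + 1 : ℝ) ≠ 0 := by positivity
  push_cast
  field_simp
  ring

open Nat in
/-- The untruncated kernel `(a - b)!` has positive minors; both orders are reversed here, so that the
pivot is in the first row and column. Dividing each row by its first entry and subtracting the
preceding row leaves a matrix of size one less, whose rows are, by `factorial_div_sub`, positive
combinations of rows of matrices of the same kind. Multilinearity of the determinant and induction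
finish the argument. -/
theorem full_pos_rev (n : ℕ) : ∀ (a b : Fin n → ℕ), StrictMono a → StrictAnti b →
    (∀ i j, b j ≤ a i) → 0 < (Matrix.of fun i j => ((a i - b j)! : ℝ)).det := by
  induction n with
  | zero => intro a b _ _ _; simp
  | succ n ih =>
    intro a b ha hb hab
    let M : Matrix (Fin (n + 1)) (Fin (n + 1)) ℝ :=
      Matrix.of fun i j => ((a i - b j)! : ℝ) / (a i - b 0)!
    let g : Fin n → ℕ → Fin n → ℝ := fun i t j =>
      (1 / (t + 1 - b 0)! : ℝ) * ((b 0 - b j.succ : ℝ) * (t - b j.succ)!)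
    -- By telescoping, the difference of rows `i + 1` and `i` is the sum of `g i t` over `t` in `S i`.
    let S : Fin n → Finset ℕ := fun i => Finset.Ico (a i.castSucc) (a i.succ)
    let N : Matrix (Fin (n + 1)) (Fin (n + 1)) ℝ :=
      Matrix.of fun i j => Fin.cases (M 0 j) (fun k => M k.succ j - M k.castSucc j) i
    have hM0 : ∀ i, M i 0 = 1 := fun i => div_self (by positivity)
    have h1 : (Matrix.of fun i j => ((a i - b j)! : ℝ)).det = (∏ i, ((a i - b 0)! : ℝ)) * M.det := by
      rw [← Matrix.det_mul_column]
      congr 1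
      ext i j
      simp only [Matrix.of_apply, M]
      field_simp
    have h2 : M.det = N.det :=
      Matrix.det_eq_of_forall_row_eq_smul_add_pred (fun _ => 1) (fun j => by simp [N])
        (fun i j => by simp [N])
    have h3 : N.det = (N.submatrix Fin.succ Fin.succ).det := by
      rw [Matrix.det_succ_column_zero, Fin.sum_univ_succ, Finset.sum_eq_zero]
      · have hz : (0 : Fin (n + 1)).succAbove = Fin.succ := by ext; simp
        simp [N, hM0, hz]
      · intro i _
        simp [N, hM0]
    have h4 : N.submatrix Fin.succ Fin.succ = fun i => ∑ t ∈ S i, g i t := by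
      ext i j
      have hlt : a i.castSucc < a i.succ := ha (Fin.castSucc_lt_succ)
      rw [Finset.sum_apply]
      have := Finset.sum_Ico_sub (fun t : ℕ => ((t - b j.succ)! : ℝ) / (t - b 0)!) hlt.le
      simp only [Matrix.submatrix_apply, N, M, Matrix.of_apply, Fin.cases_succ]
      rw [← this]
      refine Finset.sum_congr rfl fun t ht => ?_
      rw [factorial_div_sub ((hab _ _).trans (Finset.mem_Ico.1 ht).1)
        (hb (Fin.succ_pos j)).le]
      simp only [g]
      ring
    have h5 : (N.submatrix Fin.succ Fin.succ).det =
        ∑ r ∈ Fintype.piFinset S, Matrix.det (fun i => g i (r i)) := by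
      rw [h4]
      exact (Matrix.detRowAlternating (n := Fin n) (R := ℝ)).toMultilinearMap.map_sum_finset g S
    rw [h1, h2, h3, h5]
    refine mul_pos (Finset.prod_pos fun i _ => by positivity) (Finset.sum_pos ?_ ?_)
    · intro r hr
      rw [Fintype.mem_piFinset] at hr
      have hr' := fun i => Finset.mem_Ico.1 (hr i)
      have e : Matrix.det (fun i => g i (r i)) = (∏ i, (1 / (r i + 1 - b 0)! : ℝ)) *
          ((∏ j : Fin n, (b 0 - b j.succ : ℝ)) *
            (Matrix.of fun i j : Fin n => ((r i - b j.succ)! : ℝ)).det) := by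
        rw [← Matrix.det_mul_row, ← Matrix.det_mul_column]
        rfl
      rw [e]
      refine mul_pos (Finset.prod_pos fun i _ => by positivity)
        (mul_pos (Finset.prod_pos fun j _ => ?_) (ih r (fun j => b j.succ) ?_ ?_ ?_))
      · exact sub_pos.2 (Nat.cast_lt.2 (hb (Fin.succ_pos j)))
      · intro i k hik
        calc r i < a i.succ := (hr' i).2
          _ ≤ a k.castSucc := ha.monotone (by
            rw [Fin.le_def]; simpa using Nat.succ_le_of_lt (Fin.lt_def.1 hik))
          _ ≤ r k := (hr' k).1
      · exact fun i k hik => hb (Fin.succ_lt_succ_iff.2 hik)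
      · exact fun i j => (hab _ _).trans (hr' i).1
    · rw [Fintype.piFinset_nonempty]
      exact fun i => Finset.nonempty_Ico.2 (ha Fin.castSucc_lt_succ)

/-- The factorial `(a - b)!`, replaced by `0` when `a < b`. -/
noncomputable def truncFactorial (a b : ℕ) : ℝ := if b ≤ a then (Nat.factorial (a - b) : ℝ) else 0

/-- The determinant of the matrix of truncated factorials. Up to positive row and column factors this
is the determinant of the inverse binomial matrix. -/
noncomputable def truncDet {n : ℕ} (a b : Fin n → ℕ) : ℝ :=
  (Matrix.of fun i j => truncFactorial (a i) (b j)).det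

/-- The contribution of one cell to the sign: `-1` at a zero entry and `1` elsewhere. -/
noncomputable def cellSign (a b : ℕ) : ℝ := if b ≤ a then 1 else -1

/-- The product of the signs of all cells, that is `(-1) ^ ω`; see `signProd_eq`. -/
noncomputable def signProd {n : ℕ} (a b : Fin n → ℕ) : ℝ := ∏ i, ∏ j, cellSign (a i) (b j)

theorem full_pos {n : ℕ} (a b : Fin n → ℕ) (ha : StrictAnti a) (hb : StrictMono b)
    (hab : ∀ i j, b j ≤ a i) : 0 < signProd a b * truncDet a b := by
  have h := full_pos_rev n (fun i => a i.rev) (fun j => b j.rev)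
    (fun i j h => ha (Fin.rev_lt_rev.2 h)) (fun i j h => hb (Fin.rev_lt_rev.2 h))
    (fun i j => hab _ _)
  have h1 : truncDet a b = (Matrix.of fun i j => (Nat.factorial (a (Fin.rev i) - b (Fin.rev j)) : ℝ)).det := by
    rw [truncDet, ← Matrix.det_submatrix_equiv_self Fin.revPerm]
    congr 1
    ext i j
    simp [truncFactorial, hab]
  have h2 : signProd a b = 1 := by simp [signProd, cellSign, hab]
  rw [h1, h2, one_mul]
  exact h

/-- If some antidiagonal entry vanishes, the zero block to its lower right meets every permutation. -/
theorem truncDet_eq_zero {n : ℕ} (a b : Fin n → ℕ) (ha : StrictAnti a) (hb : StrictMono b)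
    (i : Fin n) (hi : a i < b i.rev) : truncDet a b = 0 := by
  rw [truncDet, Matrix.det_apply]
  refine Finset.sum_eq_zero fun σ _ => ?_
  suffices h : ∃ k, a (σ k) < b k by
    obtain ⟨k, hk⟩ := h
    rw [Finset.prod_eq_zero (Finset.mem_univ k), smul_zero]
    simp [truncFactorial, hk]
  by_contra! h
  have hsub : (Finset.Ici i.rev).map σ.toEmbedding ⊆ Finset.Iio i := by
    intro x hx
    obtain ⟨k, hk, rfl⟩ := Finset.mem_map.1 hx
    rw [Finset.mem_Iio]
    exact ha.lt_iff_gt.1 (hi.trans_le ((hb.monotone (Finset.mem_Ici.1 hk)).trans (h k)))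
  have hc := Finset.card_le_card hsub
  rw [Finset.card_map, Fin.card_Ici, Fin.card_Iio, Fin.val_rev] at hc
  have := i.isLt
  omega

/-- The signs of the whole matrix and of the five minors in the Desnanot–Jacobi identity when the
first row and column have no zero entries: `I` collects the interior cells, `R` and `C` the interior part of the last row and
column. -/
theorem signProd_minors {n : ℕ} (a b : Fin (n + 2) → ℕ) (hrow : ∀ j, b j ≤ a 0) (hcol : ∀ i, b 0 ≤ a i) :
    ∃ I R C : ℝ,
      signProd (fun i : Fin n => a i.succ.castSucc) (fun j : Fin n => b j.succ.castSucc) = I ∧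
      signProd (fun i : Fin (n + 1) => a i.castSucc) (fun j : Fin (n + 1) => b j.castSucc) = I ∧
      signProd (fun i : Fin (n + 1) => a i.castSucc) (fun j : Fin (n + 1) => b j.succ) = I * C ∧
      signProd (fun i : Fin (n + 1) => a i.succ) (fun j : Fin (n + 1) => b j.castSucc) = I * R ∧
      signProd (fun i : Fin (n + 1) => a i.succ) (fun j : Fin (n + 1) => b j.succ) =
        I * R * C * cellSign (a (Fin.last _)) (b (Fin.last _)) ∧
      signProd a b = I * R * C * cellSign (a (Fin.last _)) (b (Fin.last _)) := by
  have hr : ∀ j, cellSign (a 0) (b j) = 1 := fun j => if_pos (hrow j)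
  have hc : ∀ i, cellSign (a i) (b 0) = 1 := fun i => if_pos (hcol i)
  refine ⟨_, ∏ j : Fin n, cellSign (a (Fin.last _)) (b j.succ.castSucc),
    ∏ i : Fin n, cellSign (a i.succ.castSucc) (b (Fin.last _)), rfl, ?_, ?_, ?_, ?_, ?_⟩
  · simp [signProd, Fin.prod_univ_succ (n := n), hr, hc]
  · rw [signProd, Fin.prod_univ_succ]
    simp only [Fin.castSucc_zero, hr, Finset.prod_const_one, one_mul]
    simp only [signProd, Fin.prod_univ_castSucc (n := n), Fin.succ_castSucc, Fin.succ_last,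
      Finset.prod_mul_distrib]
  · rw [signProd, Fin.prod_univ_castSucc]
    simp only [Fin.prod_univ_succ (n := n), Fin.castSucc_zero, hc, one_mul]
    simp only [signProd, Fin.succ_castSucc, Fin.succ_last]
  · simp only [signProd, Fin.prod_univ_castSucc (n := n), Fin.succ_castSucc, Fin.succ_last,
      Finset.prod_mul_distrib]
    ring
  · have : signProd a b = signProd (fun i : Fin (n + 1) => a i.succ) (fun j : Fin (n + 1) => b j.succ) := by
      simp [signProd, Fin.prod_univ_succ (n := n + 1), hr, hc]
    rw [this]
    simp only [signProd, Fin.prod_univ_castSucc (n := n), Fin.succ_castSucc, Fin.succ_last,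
      Finset.prod_mul_distrib]
    ring

/-- The sign of the truncated determinant, by induction on the size through the Desnanot–Jacobi
identity. The zero in the lower right corner reverses the sign of the product of the two diagonal
minors relative to that of the other two, so that the two terms of the identity do not cancel. -/
theorem signProd_mul_truncDet_pos (n : ℕ) : ∀ (a b : Fin n → ℕ), StrictAnti a → StrictMono b →
    (∀ i, b i.rev ≤ a i) → 0 < signProd a b * truncDet a b := by
  induction n using Nat.strong_induction_on with
  | _ n ih =>
  intro a b ha hb hab
  by_cases hfull : ∀ i j, b j ≤ a i
  · exact full_pos a b ha hb hfull
  push Not at hfull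
  obtain ⟨i₀, j₀, h0⟩ := hfull
  match n, ih, a, b, ha, hb, hab, i₀, j₀, h0 with
  | 0, _, _, _, _, _, _, i₀, _, _ => exact i₀.elim0
  | 1, _, a, b, _, _, hab, i₀, j₀, h0 =>
    have h1 := hab i₀
    rw [Subsingleton.elim i₀.rev j₀] at h1
    omega
  | n + 2, ih, a, b, ha, hb, hab, i₀, j₀, h0 =>
    have hrow : ∀ j, b j ≤ a 0 := fun j =>
      (hb.monotone (Fin.le_last j)).trans (by simpa using hab 0)
    have hcol : ∀ i, b 0 ≤ a i := fun i =>
      le_trans (by simpa using hab (Fin.last _)) (ha.antitone (Fin.le_last i))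
    have hz : cellSign (a (Fin.last _)) (b (Fin.last _)) = -1 := if_neg (by
      have := ha.antitone (Fin.le_last i₀)
      have := hb.monotone (Fin.le_last j₀)
      omega)
    obtain ⟨I, R, C, sI, sCC, sCS, sSC, sSS, sA⟩ := signProd_minors a b hrow hcol
    rw [hz] at sSS sA
    have hac : StrictAnti fun i : Fin (n + 1) => a i.castSucc := fun i j h => ha (by simpa using h)
    have has : StrictAnti fun i : Fin (n + 1) => a i.succ := fun i j h => ha (by simpa using h)
    have hbc : StrictMono fun i : Fin (n + 1) => b i.castSucc := fun i j h => hb (by simpa using h)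
    have hbs : StrictMono fun i : Fin (n + 1) => b i.succ := fun i j h => hb (by simpa using h)
    have pI := ih n (by omega) (fun i => a i.succ.castSucc) (fun j => b j.succ.castSucc)
      (fun i j h => ha (by simpa using h)) (fun i j h => hb (by simpa using h))
      (fun i => by simpa [Fin.rev_succ, Fin.rev_castSucc] using hab i.succ.castSucc)
    have pCC := ih (n + 1) (by omega) _ _ hac hbc (fun i =>
      (hb.monotone (Fin.castSucc_lt_succ).le).trans
        (by simpa [Fin.rev_castSucc] using hab i.castSucc))
    have pCS := ih (n + 1) (by omega) _ _ hac hbs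
      (fun i => by simpa [Fin.rev_castSucc] using hab i.castSucc)
    have pSC := ih (n + 1) (by omega) _ _ has hbc
      (fun i => by simpa [Fin.rev_succ] using hab i.succ)
    -- The lower right block may violate the antidiagonal condition; its determinant is then zero.
    have pSS : 0 ≤ signProd (fun i : Fin (n + 1) => a i.succ) (fun j : Fin (n + 1) => b j.succ) *
        truncDet (fun i : Fin (n + 1) => a i.succ) (fun j : Fin (n + 1) => b j.succ) := by
      by_cases h : ∀ i : Fin (n + 1), b i.rev.succ ≤ a i.succ
      · exact (ih (n + 1) (by omega) _ _ has hbs h).le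
      · push Not at h
        obtain ⟨i, hi⟩ := h
        rw [truncDet_eq_zero _ _ has hbs i hi, mul_zero]
    have hd : truncDet a b * truncDet (fun i : Fin n => a i.succ.castSucc) (fun j : Fin n => b j.succ.castSucc) =
        truncDet (fun i : Fin (n + 1) => a i.succ) (fun j : Fin (n + 1) => b j.succ) *
        truncDet (fun i : Fin (n + 1) => a i.castSucc) (fun j : Fin (n + 1) => b j.castSucc) -
        truncDet (fun i : Fin (n + 1) => a i.castSucc) (fun j : Fin (n + 1) => b j.succ) *
        truncDet (fun i : Fin (n + 1) => a i.succ) (fun j : Fin (n + 1) => b j.castSucc) :=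
      dodgson n (Matrix.of fun i j => truncFactorial (a i) (b j))
    rw [sI] at pI
    rw [sCC] at pCC
    rw [sCS] at pCS
    rw [sSC] at pSC
    rw [sSS] at pSS
    rw [sA]
    refine pos_of_mul_pos_left (b := I * truncDet (fun i : Fin n => a i.succ.castSucc)
      (fun j : Fin n => b j.succ.castSucc)) ?_ pI.le
    have h1 := mul_nonneg pSS pCC.le
    have h2 := mul_pos pCS pSC
    linear_combination h1 + h2 + (I * R * C) * I * hd

theorem signProd_eq {n : ℕ} (a b : Fin n → ℕ) :
    signProd a b = (-1) ^ (Finset.univ.filter fun p : Fin n × Fin n => a p.1 < b p.2).card := by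
  rw [signProd, ← Fintype.prod_prod_type' (fun i j => cellSign (a i) (b j)), ← Finset.prod_const,
    Finset.prod_filter]
  refine Finset.prod_congr rfl fun p _ => ?_
  by_cases h : b p.2 ≤ a p.1
  · simp [cellSign, h, not_lt.2 h]
  · simp [cellSign, h, not_le.1 h]

open Nat in
theorem det_inv_choose {n : ℕ} (a b : Fin n → ℕ) :
    (Matrix.of fun i j : Fin n =>
        if b j ≤ a i then (((a i).choose (b j) : ℝ))⁻¹ else 0).det =
      ((∏ i, (1 / (a i)! : ℝ)) * ∏ j, ((b j)! : ℝ)) * truncDet a b := by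
  rw [truncDet, mul_assoc, ← Matrix.det_mul_row, ← Matrix.det_mul_column]
  congr 1
  ext i j
  simp only [Matrix.of_apply, truncFactorial]
  split_ifs with h
  · rw [Nat.cast_choose ℝ h]
    field_simp
  · simp

/-- Any inverse binomial matrix is nonsingular, and the sign of its determinant is
`(-1)^ω` where `ω` is the number of zero entries. -/
theorem stmt12 (n : ℕ) (a b : Fin n → ℕ)
    (ha : StrictAnti a) (hapos : ∀ i, 0 < a i)
    (hb : StrictMono b) (hbpos : ∀ j, 0 < b j)
    (hab : ∀ i : Fin n, b i.rev ≤ a i) :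
    (Matrix.of fun i j : Fin n =>
        if b j ≤ a i then (((a i).choose (b j) : ℝ))⁻¹ else 0).det ≠ 0 ∧
    (Even (Finset.univ.filter fun p : Fin n × Fin n => a p.1 < b p.2).card →
      0 < (Matrix.of fun i j : Fin n =>
        if b j ≤ a i then (((a i).choose (b j) : ℝ))⁻¹ else 0).det) ∧
    (Odd (Finset.univ.filter fun p : Fin n × Fin n => a p.1 < b p.2).card →
      (Matrix.of fun i j : Fin n =>
        if b j ≤ a i then (((a i).choose (b j) : ℝ))⁻¹ else 0).det < 0) := by
  have h := signProd_mul_truncDet_pos n a b ha hb hab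
  rw [signProd_eq] at h
  rw [det_inv_choose]
  have hc : 0 < (∏ i, (1 / (Nat.factorial (a i)) : ℝ)) * ∏ j, ((Nat.factorial (b j)) : ℝ) :=
    mul_pos (Finset.prod_pos fun i _ => by positivity) (Finset.prod_pos fun j _ => by positivity)
  refine ⟨mul_ne_zero hc.ne' (right_ne_zero_of_mul h.ne'), fun he => ?_, fun ho => ?_⟩
  · rw [he.neg_one_pow, one_mul] at h
    exact mul_pos hc h
  · rw [ho.neg_one_pow] at h
    exact mul_neg_of_pos_of_neg hc (by linarith)
end
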